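/- Let L be an algebraically closed field and let K be a field extension of L that is finitely generated over L and of transcendence degree 1 over L (i.e. K is the function field of a curve over L). Then every central simple K-algebra D of finite dimension d^2 over K is isomorphic as a K-algebra to the matrix algebra of d-by-d matrices over K. -/

import Mathlib

open MvPolynomial in
lemma height_point_le {L : Type*} [Field L] {σ : Type*} (x : σ → L) :
    (vanishingIdeal L {x} : Ideal (MvPolynomial σ L)).height =
      (vanishingIdeal L {(0 : σ → L)} : Ideal (MvPolynomial σ L)).height := by
  let e : MvPolynomial σ L ≃ₐ[L] MvPolynomial σ L :=
    AlgEquiv.ofAlgHom (aeval fun i => X i + C (x i)) (aeval fun i => X i - C (x i))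
      (by ext i; simp) (by ext i; simp)
  have h : (vanishingIdeal L {x} : Ideal (MvPolynomial σ L)) =
      (vanishingIdeal L {(0 : σ → L)} : Ideal (MvPolynomial σ L)).comap e.toRingEquiv := by
    ext p
    have : (aeval (0 : σ → L)) (e p) = aeval x p := by
      have : ((aeval (0 : σ → L)).comp e.toAlgHom) = aeval x := by
        ext i; simp [e]
      exact congrArg (fun f => f p) this
    rw [mem_vanishingIdeal_singleton_iff, Ideal.mem_comap]
    erw [mem_vanishingIdeal_singleton_iff]
    rw [← this]; rfl
  rw [h]
  exact RingEquiv.height_comap _ _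

open MvPolynomial in
lemma card_le_height_point {L : Type*} [Field L] [IsAlgClosed L] (N r : ℕ)
    (h : (vanishingIdeal L {(0 : Fin N → L)} : Ideal (MvPolynomial (Fin N) L)).height ≤ r) :
    N ≤ r := by
  have h1 : ringKrullDim (MvPolynomial (Fin N) L) ≤ ((r : ℕ∞) : WithBot ℕ∞) := by
    refine (ringKrullDim_le_iff_isMaximal_height_le _).2 fun M hM => ?_
    obtain ⟨x, rfl⟩ := (isMaximal_iff_eq_vanishingIdeal_singleton).1 hM
    rw [height_point_le]
    exact_mod_cast h
  rw [MvPolynomial.ringKrullDim_of_isNoetherianRing, ringKrullDim_eq_zero_of_field] at h1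
  simp at h1
  exact_mod_cast h1

open MvPolynomial in
lemma exists_zero_algClosed {L : Type*} [Field L] [IsAlgClosed L] {V W : Type*}
    [AddCommGroup V] [Module L V] [FiniteDimensional L V]
    [AddCommGroup W] [Module L W] [FiniteDimensional L W] {n : ℕ} (hn : n ≠ 0)
    (g : MultilinearMap L (fun _ : Fin n => V) W)
    (h : Module.finrank L W < Module.finrank L V) : ∃ v : V, v ≠ 0 ∧ g (fun _ => v) = 0 := by
  by_contra! hcon
  let bV := Module.finBasis L V
  let bW := Module.finBasis L W
  let f : Fin (Module.finrank L W) → MvPolynomial (Fin (Module.finrank L V)) L := fun j =>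
    ∑ i : Fin n → Fin (Module.finrank L V), C (bW.repr (g (fun k => bV (i k))) j) * ∏ k, X (i k)
  have hf : ∀ x j, aeval x (f j) = bW.repr (g (fun _ => bV.equivFun.symm x)) j := by
    intro x j
    simp only [Module.Basis.equivFun_symm_apply]
    rw [MultilinearMap.map_sum]
    simp [f, MultilinearMap.map_smul_univ, mul_comm]
  have hz : zeroLocus L (Ideal.span (Set.range f)) = {(0 : Fin (Module.finrank L V) → L)} := by
    rw [zeroLocus_span]
    ext x
    simp only [Set.mem_ofPred_eq, Set.forall_mem_range, Set.mem_singleton_iff, hf]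
    constructor
    · intro hx
      by_contra hx0
      refine hcon (bV.equivFun.symm x) (bV.equivFun.symm.map_ne_zero_iff.2 hx0) ?_
      exact bW.repr.injective (by ext j; simpa using hx j)
    · rintro rfl j
      have : g (fun _ => bV.equivFun.symm 0) = 0 :=
        g.map_coord_zero ⟨0, Nat.pos_of_ne_zero hn⟩ (by simp)
      rw [this]; simp
  have hr := vanishingIdeal_zeroLocus_eq_radical (K := L) (Ideal.span (Set.range f))
  rw [hz] at hr
  have hm : (vanishingIdeal L {(0 : Fin (Module.finrank L V) → L)}) ∈
      (Ideal.span (Set.range f)).minimalPrimes := by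
    rw [← Ideal.radical_minimalPrimes, ← hr, Ideal.minimalPrimes_eq_subsingleton_self]
    rfl
  classical
  have hh := Ideal.height_le_card_of_mem_minimalPrimes_span_finset
    (s := Finset.univ.image f) (p := vanishingIdeal L {(0 : Fin (Module.finrank L V) → L)})
    (by simpa using hm)
  have := card_le_height_point _ _ hh
  have h2 := Finset.card_image_le (s := Finset.univ) (f := f)
  simp only [Finset.card_univ, Fintype.card_fin] at h2
  omega

open Polynomial in
lemma tsen_aux {L : Type*} [Field L] [IsAlgClosed L] {F : Type*} [Field F] [Algebra L F]
    [Algebra L[X] F] [IsScalarTower L L[X] F] [IsFractionRing L[X] F] {n N r : ℕ} (hn : n ≠ 0)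
    (g : MultilinearMap F (fun _ : Fin n => (Fin N → F)) (Fin r → F))
    (h : n * r < N) : ∃ v : Fin N → F, v ≠ 0 ∧ g (fun _ => v) = 0 := by
  classical
  obtain ⟨b, hb⟩ := IsLocalization.exist_integer_multiples_of_finite (nonZeroDivisors L[X])
    (fun ij : (Fin n → Fin N) × Fin r => g (fun k => Pi.single (ij.1 k) (1 : F)) ij.2)
  choose q hq using hb
  let c : ℕ := Finset.univ.sup fun ij => (q ij).natDegree
  let t : ℕ := r * (c + 1)
  let emb (m M : ℕ) : (Fin m → degreeLT L M) →ₗ[L] (Fin m → F) :=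
    LinearMap.pi fun i => (IsScalarTower.toAlgHom L L[X] F).toLinearMap ∘ₗ
      (degreeLT L M).subtype ∘ₗ LinearMap.proj i
  have emb_inj : Function.Injective (emb N (t+1)) := by
    intro x y hxy
    funext i
    have := congrFun hxy i
    simpa [emb] using this
  let g' : MultilinearMap F (fun _ : Fin n => (Fin N → F)) (Fin r → F) :=
    (algebraMap L[X] F b) • g
  let G0 : MultilinearMap L (fun _ : Fin n => (Fin N → degreeLT L (t+1))) (Fin r → F) :=
    (g'.restrictScalars L).compLinearMap fun _ => emb N (t+1)
  have hG : ∀ p, G0 p ∈ LinearMap.range (emb r (n * t + c + 1)) := by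
    intro p
    have key : ∀ j, G0 p j = algebraMap L[X] F
        (∑ i : Fin n → Fin N, (∏ k, (p k (i k) : L[X])) * q (i, j)) := by
      intro j
      have h1 : ∀ k, emb N (t+1) (p k) =
          ∑ i, (algebraMap L[X] F (p k i)) • (Pi.single i (1 : F) : Fin N → F) := by
        intro k
        funext i'
        simp [emb, Finset.sum_apply, Pi.single_apply, Algebra.smul_def]
      simp only [G0, MultilinearMap.compLinearMap_apply, MultilinearMap.coe_restrictScalars, h1]
      rw [MultilinearMap.map_sum]
      simp only [MultilinearMap.map_smul_univ, Finset.sum_apply, map_sum, map_mul, map_prod, hq]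
      refine Finset.sum_congr rfl fun i _ => ?_
      simp [g', Algebra.smul_def]
    have hdeg : ∀ j, (∑ i : Fin n → Fin N, (∏ k, (p k (i k) : L[X])) * q (i, j)) ∈
        degreeLT L (n * t + c + 1) := by
      intro j
      refine Submodule.sum_mem _ fun i _ => ?_
      rw [mem_degreeLT]
      refine lt_of_le_of_lt degree_le_natDegree ?_
      have h1 : (∏ k, (p k (i k) : L[X])).natDegree ≤ n * t := by
        refine (natDegree_prod_le _ _).trans ?_
        refine (Finset.sum_le_card_nsmul _ _ t fun k _ => ?_).trans (by simp)
        have := (p k (i k)).2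
        rw [mem_degreeLT] at this
        exact natDegree_le_iff_degree_le.2 (Order.le_of_lt_succ (by exact_mod_cast this))
      have h2 : (q (i, j)).natDegree ≤ c :=
        Finset.le_sup (f := fun ij => (q ij).natDegree) (Finset.mem_univ (i,j))
      have h3 := natDegree_mul_le (p := ∏ k, (p k (i k) : L[X])) (q := q (i,j))
      exact_mod_cast (by omega)
    refine ⟨fun j => ⟨_, hdeg j⟩, ?_⟩
    funext j
    rw [key j]
    simp [emb]
  let G := G0.codRestrict _ hG
  have hfr : ∀ m M, Module.finrank L (Fin m → degreeLT L M) = m * M := by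
    intro m M
    rw [Module.finrank_pi_fintype]
    simp [(degreeLTEquiv L M).finrank_eq]
  have hfin : ∀ M, Module.Finite L (degreeLT L M) := fun M =>
    Module.Finite.equiv (degreeLTEquiv L M).symm
  obtain ⟨v, hv0, hv⟩ := exists_zero_algClosed hn G (by
    refine lt_of_le_of_lt (LinearMap.finrank_range_le _) ?_
    rw [hfr, hfr]
    have : t = r * (c+1) := rfl
    calc r * (n * t + c + 1) = (n * r) * t + t := by rw [this]; ring
      _ = (n * r + 1) * t := by ring
      _ ≤ N * t := Nat.mul_le_mul_right _ h
      _ < N * (t + 1) := by nlinarith)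
  refine ⟨emb N (t+1) v, fun h0 => hv0 (emb_inj (by simpa using h0)), ?_⟩
  have h1 : G0 (fun _ => v) = 0 := congrArg Subtype.val hv
  have hb0 : algebraMap L[X] F b ≠ 0 := by
    simp
  have h2 : algebraMap L[X] F b • g (fun _ => emb N (t+1) v) = 0 := h1
  exact (smul_eq_zero.1 h2).resolve_left hb0

open Polynomial in
lemma tsen {L : Type*} [Field L] [IsAlgClosed L] {F : Type*} [Field F] [Algebra L F]
    [Algebra L[X] F] [IsScalarTower L L[X] F] [IsFractionRing L[X] F] {n : ℕ} (hn : n ≠ 0)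
    {V W : Type*}
    [AddCommGroup V] [Module F V] [FiniteDimensional F V]
    [AddCommGroup W] [Module F W] [FiniteDimensional F W]
    (g : MultilinearMap F (fun _ : Fin n => V) W)
    (h : n * Module.finrank F W < Module.finrank F V) : ∃ v : V, v ≠ 0 ∧ g (fun _ => v) = 0 := by
  let bV := Module.finBasis F V
  let bW := Module.finBasis F W
  obtain ⟨v, h0, hv⟩ := tsen_aux (L := L) hn (bW.equivFun.toLinearMap.compMultilinearMap
    (g.compLinearMap fun _ => bV.equivFun.symm.toLinearMap)) h
  exact ⟨bV.equivFun.symm v, bV.equivFun.symm.map_ne_zero_iff.2 h0, by simpa using hv⟩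

open scoped TensorProduct

lemma simple_tensor_field {K : Type*} [Field K] {D : Type*} [DivisionRing D] [Algebra K D]
    [Algebra.IsCentral K D] (E : Type*) [Field E] [Algebra K E] : IsSimpleRing (D ⊗[K] E) := by
  classical
  let b := Module.Basis.ofVectorSpace K E
  let B := Algebra.TensorProduct.basis D b
  have hl : ∀ (a : D) (x : D ⊗[K] E) i, B.repr ((a ⊗ₜ 1) * x) i = a * B.repr x i := by
    intro a x i
    have : (a ⊗ₜ[K] (1 : E)) * x = a • x := by
      induction x with
      | zero => simp
      | add x y hx hy => rw [mul_add, hx, hy, smul_add]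
      | tmul d e => simp [TensorProduct.smul_tmul']
    rw [this, map_smul]; rfl
  have hr : ∀ (a : D) (x : D ⊗[K] E) i, B.repr (x * (a ⊗ₜ 1)) i = B.repr x i * a := by
    intro a x i
    induction x with
    | zero => simp
    | add x y hx hy => rw [add_mul, map_add, Finsupp.add_apply, hx, hy, map_add, Finsupp.add_apply,
        add_mul]
    | tmul d e =>
      simp [B, Algebra.TensorProduct.basis_repr_tmul, mul_assoc, Algebra.commutes]
  rw [isSimpleRing_iff_isTwoSided_imp]
  refine ⟨inferInstance, fun I hI => ?_⟩
  by_cases hI0 : I = ⊥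
  · exact Or.inl hI0
  right
  -- minimal support element
  have hex : ∃ m : ℕ, ∃ x ∈ I, x ≠ 0 ∧ (B.repr x).support.card = m := by
    obtain ⟨x, hx, hx0⟩ := Submodule.exists_mem_ne_zero_of_ne_bot hI0
    exact ⟨_, x, hx, hx0, rfl⟩
  obtain ⟨x, hxI, hx0, hxm⟩ := Nat.find_spec hex
  have hmin : ∀ y ∈ I, (B.repr y).support.card < (B.repr x).support.card → y = 0 := by
    intro y hy hlt
    by_contra hy0
    exact Nat.find_min hex (hxm ▸ hlt) ⟨y, hy, hy0, rfl⟩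
  obtain ⟨i0, hi0⟩ : ∃ i, B.repr x i ≠ 0 := by
    by_contra! hc
    exact hx0 (B.repr.injective (by ext i; simpa using hc i))
  -- normalise
  let y := ((B.repr x i0)⁻¹ ⊗ₜ[K] (1 : E)) * x
  have hyI : y ∈ I := I.mul_mem_left _ hxI
  have hyr : ∀ i, B.repr y i = (B.repr x i0)⁻¹ * B.repr x i := fun i => hl _ _ _
  have hy1 : B.repr y i0 = 1 := by rw [hyr, inv_mul_cancel₀ hi0]
  have hcomm : ∀ a i, a * B.repr y i = B.repr y i * a := by
    intro a i
    have hz : (a ⊗ₜ[K] (1 : E)) * y - y * (a ⊗ₜ[K] (1 : E)) = 0 := by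
      refine hmin _ (I.sub_mem (I.mul_mem_left _ hyI) (I.mul_mem_right _ hyI)) ?_
      refine Finset.card_lt_card ⟨fun j hj => ?_, fun hsub => ?_⟩
      · rw [Finsupp.mem_support_iff] at hj ⊢
        intro h0
        apply hj
        rw [map_sub, Finsupp.sub_apply, hl, hr, hyr, h0]; simp
      · have := hsub (Finsupp.mem_support_iff.2 hi0)
        rw [Finsupp.mem_support_iff] at this
        apply this
        rw [map_sub, Finsupp.sub_apply, hl, hr, hy1]; simp
    have := congrArg (fun w => B.repr w i) hz
    simp only [map_sub, Finsupp.sub_apply, hl, hr, map_zero, Finsupp.zero_apply] at this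
    exact sub_eq_zero.1 this
  have hc : ∀ i, ∃ c : K, B.repr y i = algebraMap K D c := fun i =>
    (Algebra.IsCentral.mem_center_iff K).1 (Subalgebra.mem_center_iff.2 fun a => hcomm a i)
  choose c hc using hc
  have hy : y = 1 ⊗ₜ[K] (∑ i ∈ (B.repr y).support, c i • b i) := by
    conv_lhs => rw [← B.linearCombination_repr y, Finsupp.linearCombination_apply, Finsupp.sum]
    rw [TensorProduct.tmul_sum]
    refine Finset.sum_congr rfl fun i _ => ?_
    rw [hc, algebraMap_smul, TensorProduct.tmul_smul]
    simp [B]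
  set e := ∑ i ∈ (B.repr y).support, c i • b i
  have he : e ≠ 0 := by
    intro h0
    rw [h0, TensorProduct.tmul_zero] at hy
    rw [hy] at hy1
    simp at hy1
  rw [Ideal.eq_top_iff_one]
  have : (1 : D ⊗[K] E) = (1 ⊗ₜ[K] e⁻¹) * y := by
    rw [hy, Algebra.TensorProduct.tmul_mul_tmul, inv_mul_cancel₀ he]; simp [Algebra.TensorProduct.one_def]
  rw [this]
  exact I.mul_mem_left _ hyI

lemma central_tensor_field {K : Type*} [Field K] {D : Type*} [Ring D] [Algebra K D]
    [Algebra.IsCentral K D] (E : Type*) [Field E] [Algebra K E] :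
    Algebra.IsCentral E (E ⊗[K] D) := by
  refine ⟨fun x hx => ?_⟩
  have h1 : x ∈ Subalgebra.centralizer K
      (Algebra.TensorProduct.includeRight : D →ₐ[K] E ⊗[K] D).range := by
    rw [Subalgebra.mem_centralizer_iff]
    intro y _
    exact (Subalgebra.mem_center_iff.1 hx y)
  rw [Subalgebra.centralizer_range_includeRight_eq_center_tensorProduct] at h1
  obtain ⟨y, rfl⟩ := h1
  clear hx
  induction y with
  | zero => rw [map_zero]; exact zero_mem _
  | add y z hy hz => rw [map_add]; exact add_mem hy hz
  | tmul e d =>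
    obtain ⟨c, hc⟩ := (Algebra.IsCentral.mem_center_iff K).1 d.2
    refine Algebra.mem_bot.2 ⟨c • e, ?_⟩
    rw [Algebra.TensorProduct.algebraMap_apply]
    simp [hc, Algebra.algebraMap_eq_smul_one, TensorProduct.smul_tmul]

lemma central_of_matrix {E : Type*} [Field E] {D : Type*} [Ring D] [Algebra E D] {n : ℕ} [NeZero n]
    [Algebra.IsCentral E (Matrix (Fin n) (Fin n) D)] : Algebra.IsCentral E D := by
  refine ⟨fun x hx => ?_⟩
  have h1 : Matrix.scalarAlgHom (Fin n) E x ∈ Subalgebra.center E (Matrix (Fin n) (Fin n) D) := by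
    rw [Matrix.subalgebraCenter_eq_scalarAlgHom_map]
    exact ⟨x, hx, rfl⟩
  obtain ⟨c, hc⟩ := (Algebra.IsCentral.mem_center_iff E).1 h1
  refine Algebra.mem_bot.2 ⟨c, ?_⟩
  have := congrFun (congrFun hc 0) 0
  simpa [Matrix.algebraMap_matrix_apply] using this.symm

/-- Central simple algebras over separably closed fields are split. -/
lemma divisionRing_sepClosed {E : Type*} [Field E] [IsSepClosed E] {D : Type*} [DivisionRing D]
    [Algebra E D] [FiniteDimensional E D] [Algebra.IsCentral E D] :
    Function.Bijective (algebraMap E D) := by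
  refine ⟨(algebraMap E D).injective, ?_⟩
  by_contra hns
  have hne : (⊥ : Subalgebra E D) ≠ ⊤ := by
    intro h
    apply hns
    intro d
    exact Algebra.mem_bot.1 (h ▸ Algebra.mem_top : d ∈ (⊥ : Subalgebra E D))
  obtain ⟨x, hx, hs⟩ := JacobsonNoether.exists_separable_and_not_isCentral' hne
  apply hx
  have hint : IsIntegral E x := Algebra.IsIntegral.isIntegral x
  have hd := IsSepClosed.degree_eq_one_of_irreducible E (minpoly.irreducible hint) hs
  exact Algebra.mem_bot.2 (minpoly.mem_range_of_degree_eq_one E x hd)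

lemma split_sepClosed {E : Type*} [Field E] [IsSepClosed E] (A : Type*) [Ring A]
    [Algebra E A] [FiniteDimensional E A] [Algebra.IsCentral E A] [IsSimpleRing A] :
    ∃ (n : ℕ) (_ : NeZero n), Nonempty (A ≃ₐ[E] Matrix (Fin n) (Fin n) E) := by
  have := IsArtinianRing.of_finite E A
  obtain ⟨n, hn, D, _, _, _, ⟨e⟩⟩ := IsSimpleRing.exists_algEquiv_matrix_divisionRing_finite E A
  have : Algebra.IsCentral E (Matrix (Fin n) (Fin n) D) := .of_algEquiv E A _ e
  have : Algebra.IsCentral E D := central_of_matrix (n := n)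
  exact ⟨n, hn, ⟨e.trans <| .mapMatrix <| .symm <| .ofBijective (Algebra.ofId E D)
    divisionRing_sepClosed⟩⟩

lemma det_algEquiv {E : Type*} [Field E] {n : ℕ}
    (τ : Matrix (Fin n) (Fin n) E ≃ₐ[E] Matrix (Fin n) (Fin n) E) (A : Matrix (Fin n) (Fin n) E) :
    (τ A).det = A.det := by
  let l : Matrix (Fin n) (Fin n) E ≃ₐ[E] Module.End E (Fin n → E) := Matrix.toLinAlgEquiv'
  obtain ⟨T, hT⟩ := LinearEquiv.conjAlgEquiv_surjective E (Fin n → E) (Fin n → E)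
    ((l.symm.trans τ).trans l)
  have h1 : l (τ A) = T.conj (l A) := by
    have := congrArg (fun f => f (l A)) hT
    simp only [AlgEquiv.trans_apply, AlgEquiv.symm_apply_apply] at this
    exact this.symm
  have h2 : ∀ M, LinearMap.det (l M) = M.det := fun M => LinearMap.det_toLin' M
  rw [← h2, ← h2, h1]
  exact LinearMap.det_conj (l A) T

lemma det_mem {K : Type*} [Field K] {D : Type*} [Ring D] [Algebra K D]
    {E : Type*} [Field E] [Algebra K E] [IsGalois K E] {n : ℕ} [NeZero n]
    (φ : E ⊗[K] D ≃ₐ[E] Matrix (Fin n) (Fin n) E) (a : D) :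
    ∃ c : K, algebraMap K E c = (φ (1 ⊗ₜ a)).det := by
  change (φ (1 ⊗ₜ a)).det ∈ Set.range (algebraMap K E)
  rw [← IntermediateField.mem_bot, InfiniteGalois.mem_bot_iff_fixed]
  intro σ
  let ψ0 : D →ₐ[K] Matrix (Fin n) (Fin n) E :=
    (σ.toAlgHom.mapMatrix).comp
      ((φ.restrictScalars K).toAlgHom.comp Algebra.TensorProduct.includeRight)
  let ψ : E ⊗[K] D →ₐ[E] Matrix (Fin n) (Fin n) E :=
    Algebra.TensorProduct.lift (Algebra.ofId E _) ψ0 (fun e d => Algebra.commutes _ _)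
  let τ := AlgEquiv.ofBijective (ψ.comp φ.symm.toAlgHom) (AlgHom.bijective _)
  have h1 : τ (φ (1 ⊗ₜ a)) = σ.toAlgHom.mapMatrix (φ (1 ⊗ₜ a)) := by
    simp [τ, ψ, ψ0]
  have h2 := det_algEquiv τ (φ (1 ⊗ₜ a))
  rw [h1] at h2
  exact (AlgHom.map_det σ.toAlgHom _).trans h2

lemma dim_one {L : Type*} [Field L] [IsAlgClosed L] {F : Type*} [Field F] [Algebra L F]
    [Algebra (Polynomial L) F] [IsScalarTower L (Polynomial L) F] [IsFractionRing (Polynomial L) F]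
    {K : Type*} [Field K] [Algebra F K] [FiniteDimensional F K]
    {D : Type*} [DivisionRing D] [Algebra K D] [FiniteDimensional K D] [Algebra.IsCentral K D] :
    Module.finrank K D = 1 := by
  let E := SeparableClosure K
  have : IsSimpleRing (E ⊗[K] D) :=
    have := simple_tensor_field (K := K) (D := D) E
    IsSimpleRing.of_ringEquiv (Algebra.TensorProduct.comm K D E).toRingEquiv inferInstance
  have := central_tensor_field (K := K) (D := D) E
  obtain ⟨n, hn, ⟨φ⟩⟩ := split_sepClosed (E := E) (E ⊗[K] D)
  have hdim : Module.finrank K D = n * n := by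
    have := φ.toLinearEquiv.finrank_eq
    rw [Module.finrank_baseChange] at this
    rw [this, Module.finrank_matrix]
    simp
  rcases Nat.lt_or_ge 1 n with h1 | h1
  swap
  · have : n = 1 := le_antisymm h1 (Nat.one_le_iff_ne_zero.2 hn.out)
    rw [hdim, this]
  exfalso
  obtain ⟨π, hπ⟩ := LinearMap.exists_leftInverse_of_injective (Algebra.linearMap K E)
    (LinearMap.ker_eq_bot.2 (algebraMap K E).injective)
  let ι : D →ₗ[K] Matrix (Fin n) (Fin n) E :=
    ((φ.restrictScalars K).toAlgHom.comp Algebra.TensorProduct.includeRight).toLinearMap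
  let row (i : Fin n) : Matrix (Fin n) (Fin n) E →ₗ[K] (Fin n → E) :=
    { toFun := fun M => M i, map_add' := fun _ _ => rfl, map_smul' := fun _ _ => rfl }
  let g : MultilinearMap K (fun _ : Fin n => D) K := π.compMultilinearMap
    ((((Matrix.detRowAlternating : (Fin n → E) [⋀^Fin n]→ₗ[E] E).toMultilinearMap).restrictScalars
      K).compLinearMap fun i => row i ∘ₗ ι)
  have hg : ∀ a, algebraMap K E (g fun _ => a) = (φ (1 ⊗ₜ a)).det := by
    intro a
    obtain ⟨c, hc⟩ := det_mem φ a
    have : g (fun _ => a) = π ((φ (1 ⊗ₜ a)).det) := rfl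
    rw [this, ← hc]
    congr 1
    exact LinearMap.congr_fun hπ c
  let : Module F D := Module.compHom D (algebraMap F K)
  have : IsScalarTower F K D := ⟨fun x y z => by
    rw [Algebra.smul_def x y, mul_smul]; rfl⟩
  have : FiniteDimensional F D := FiniteDimensional.trans F K D
  obtain ⟨v, hv0, hv⟩ := tsen (L := L) hn.out (g.restrictScalars F) (by
    rw [← Module.finrank_mul_finrank F K D, hdim]
    have : 0 < Module.finrank F K := Module.finrank_pos
    nlinarith [Nat.mul_lt_mul_of_pos_right h1 (Nat.mul_pos this (by omega : 0 < n))])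
  have h0 : (φ (1 ⊗ₜ v)).det = 0 := by
    rw [← hg]
    rw [show g (fun _ => v) = 0 from hv, map_zero]
  have hu : IsUnit (φ (1 ⊗ₜ v)) :=
    ((isUnit_iff_ne_zero.2 hv0).map (Algebra.TensorProduct.includeRight : D →ₐ[K] E ⊗[K] D)).map φ
  rw [Matrix.isUnit_iff_isUnit_det, h0] at hu
  simp at hu

/-- **Splitting of central simple algebras over function fields of curves over an
algebraically closed field.**  If `L` is algebraically closed and `K/L` is a finitely
generated field extension of transcendence degree `1` (the function field of a curve
over `L`), then every central simple `K`-algebra `D` of dimension `d ^ 2` over `K`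
is isomorphic, as a `K`-algebra, to the algebra of `d × d` matrices over `K`. -/
theorem stmt0 (L : Type*) [Field L] [IsAlgClosed L]
    (K : Type*) [Field K] [Algebra L K]
    (hfg : ∃ s : Finset K, IntermediateField.adjoin L (s : Set K) = ⊤)
    (htr : ∃ x : K, IsTranscendenceBasis L (fun _ : Unit => x))
    (D : Type*) [Ring D] [Algebra K D]
    [FiniteDimensional K D] [Algebra.IsCentral K D] [IsSimpleRing D]
    (d : ℕ) (hd : Module.finrank K D = d ^ 2) :
    Nonempty (D ≃ₐ[K] Matrix (Fin d) (Fin d) K) := by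
  obtain ⟨x, hx⟩ := htr
  have hxt : Transcendental L x := (algebraicIndependent_unique_type_iff).1 hx.1
  let e := RatFunc.algEquivOfTranscendental x hxt
  have halg : Algebra.IsAlgebraic (IntermediateField.adjoin L {x}) K := by
    have := hx.isAlgebraic_field
    rwa [Set.range_const] at this
  have hfin : FiniteDimensional (IntermediateField.adjoin L {x}) K := by
    obtain ⟨s, hs⟩ := hfg
    have h1 : FiniteDimensional (IntermediateField.adjoin L {x})
        (IntermediateField.adjoin (IntermediateField.adjoin L {x}) (s : Set K)) :=
      IntermediateField.finiteDimensional_adjoin fun y _ => (halg.isAlgebraic y).isIntegral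
    have h2 : IntermediateField.adjoin (IntermediateField.adjoin L {x}) (s : Set K) = ⊤ := by
      rw [eq_top_iff]
      intro y _
      have hy : y ∈ IntermediateField.adjoin L (s : Set K) := hs ▸ IntermediateField.mem_top
      have hle : IntermediateField.adjoin L (s : Set K) ≤ (IntermediateField.adjoin
          (IntermediateField.adjoin L {x}) (s : Set K)).restrictScalars L :=
        IntermediateField.adjoin_le_iff.2 (IntermediateField.subset_adjoin _ _)
      exact hle hy
    rw [h2] at h1
    exact Module.Finite.equiv IntermediateField.topEquiv.toLinearEquiv
  let : Algebra (RatFunc L) K :=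
    ((algebraMap (IntermediateField.adjoin L {x}) K).comp (e : RatFunc L →+* _)).toAlgebra
  have : FiniteDimensional (RatFunc L) K := by
    have h1 : (algebraMap (IntermediateField.adjoin L {x}) K).Finite := RingHom.finite_algebraMap.2 hfin
    have h2 : (e : RatFunc L →+* (IntermediateField.adjoin L {x})).Finite :=
      RingHom.Finite.of_surjective _ e.surjective
    exact RingHom.finite_algebraMap.1 (h1.comp h2)
  have := IsArtinianRing.of_finite K D
  obtain ⟨n, hn, Δ, _, _, _, ⟨f⟩⟩ := IsSimpleRing.exists_algEquiv_matrix_divisionRing_finite K D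
  have : Algebra.IsCentral K (Matrix (Fin n) (Fin n) Δ) := .of_algEquiv K D _ f
  have : Algebra.IsCentral K Δ := central_of_matrix (n := n)
  have h1 : Module.finrank K Δ = 1 := dim_one (L := L) (F := RatFunc L)
  have hb : Function.Bijective (algebraMap K Δ) :=
    Algebra.bijective_algebraMap_iff.2 (Subalgebra.bot_eq_top_iff_finrank_eq_one.2 h1).symm
  have f' : D ≃ₐ[K] Matrix (Fin n) (Fin n) K :=
    f.trans <| .mapMatrix <| .symm <| .ofBijective (Algebra.ofId K Δ) hb
  have hnd : n = d := by
    have := f'.toLinearEquiv.finrank_eq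
    rw [hd, Module.finrank_matrix] at this
    simp at this
    nlinarith
  subst hnd
  exact ⟨f'⟩
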